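/- For every integer T ≥ 1, the hard-instance chain function satisfies F_T(0) − inf_{x∈ℝ^T} F_T(x) ≤ 12·T. -/

import Mathlib

open MeasureTheory

/-- The scalar function `Ψ` of the hard-instance construction. -/
noncomputable def Psi (t : ℝ) : ℝ :=
  if t ≤ 1 / 2 then 0 else Real.exp (1 - 1 / (2 * t - 1) ^ 2)

/-- The scalar function `Φ(t) = √e ∫_{−∞}^t e^{−τ²/2} dτ` of the hard-instance
construction. -/
noncomputable def Phi (t : ℝ) : ℝ :=
  Real.sqrt (Real.exp 1) * ∫ τ in Set.Iic t, Real.exp (-τ ^ 2 / 2)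

/-- The hard-instance chain function `F_T` on `ℝ^{T+1}` (so the paper's dimension `T ≥ 1`
is `T + 1` here; the paper's coordinate `xᵢ`, `1 ≤ i ≤ T`, is the zero-based coordinate
`x (i−1)`). -/
noncomputable def chainF (T : ℕ) (x : EuclideanSpace ℝ (Fin (T + 1))) : ℝ :=
  -Psi 1 * Phi (x 0) +
    ∑ i : Fin T,
      (Psi (-(x i.castSucc)) * Phi (-(x i.succ)) - Psi (x i.castSucc) * Phi (x i.succ))

/-- `prog α x` is the largest one-based index `i ∈ {0, 1, …, n}` such that `|xᵢ| > α`
(with the paper's convention `x₀ ≡ 1`, so the value `0` is allowed and returned when no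
coordinate exceeds `α`). -/
noncomputable def prog {n : ℕ} (α : ℝ) (x : EuclideanSpace ℝ (Fin n)) : ℕ :=
  (Finset.univ.filter fun i : Fin n => α < |x i|).sup fun i => (i : ℕ) + 1

/-! Every product `Ψ(s) Φ(t)` lies in `[0, 12]`: `0 ≤ Ψ ≤ e`, the Gaussian integral gives
`0 ≤ Φ ≤ √(2πe)`, and `e √(2πe) < 12`. Hence each of the `T` summands of `F_T` is at least `-12`,
so `F_T ≥ -12 T`; and since `Ψ(0) = 0`, only the first summand survives in
`F_T(0) = -Ψ(1) Φ(0) ≤ 0`. -/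

theorem Psi_of_le {t : ℝ} (ht : t ≤ 1 / 2) : Psi t = 0 :=
  if_pos ht

theorem Psi_nonneg (t : ℝ) : 0 ≤ Psi t := by
  unfold Psi
  split_ifs <;> positivity

theorem Psi_le_exp_one (t : ℝ) : Psi t ≤ Real.exp 1 := by
  unfold Psi
  split_ifs
  · positivity
  · exact Real.exp_le_exp.mpr (sub_le_self _ (by positivity))

theorem setIntegral_exp_neg_mul_sq_le {b : ℝ} (hb : 0 < b) (s : Set ℝ) :
    ∫ x in s, Real.exp (-b * x ^ 2) ≤ √(Real.pi / b) :=
  calc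
    ∫ x in s, Real.exp (-b * x ^ 2) ≤ ∫ x, Real.exp (-b * x ^ 2) :=
      setIntegral_le_integral (integrable_exp_neg_mul_sq hb) (.of_forall fun _ ↦ by positivity)
    _ = √(Real.pi / b) := integral_gaussian b

theorem Phi_nonneg (t : ℝ) : 0 ≤ Phi t :=
  mul_nonneg (Real.sqrt_nonneg _) (integral_nonneg fun _ ↦ (Real.exp_pos _).le)

theorem Phi_le (t : ℝ) : Phi t ≤ √(2 * Real.pi * Real.exp 1) := by
  have gaussian_form (τ : ℝ) : -τ ^ 2 / 2 = -(1 / 2) * τ ^ 2 := by ring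
  calc
    Phi t = √(Real.exp 1) * ∫ τ in Set.Iic t, Real.exp (-(1 / 2) * τ ^ 2) := by
      simp only [Phi, gaussian_form]
    _ ≤ √(Real.exp 1) * √(Real.pi / (1 / 2)) := by
      gcongr
      exact setIntegral_exp_neg_mul_sq_le one_half_pos _
    _ = √(2 * Real.pi * Real.exp 1) := by
      rw [← Real.sqrt_mul (Real.exp_pos 1).le]
      ring_nf

theorem exp_one_mul_sqrt_two_pi_exp_one_le : Real.exp 1 * √(2 * Real.pi * Real.exp 1) ≤ 12 := by
  have he : Real.exp 1 ≤ 2.72 := Real.exp_one_lt_d9.le.trans (by norm_num)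
  have hpi : Real.pi ≤ 3.15 := Real.pi_lt_d2.le
  calc
    Real.exp 1 * √(2 * Real.pi * Real.exp 1) ≤ 2.72 * √(2 * 3.15 * 2.72) := by gcongr
    _ ≤ 2.72 * 4.2 := by
      gcongr
      exact Real.sqrt_le_iff.mpr (by norm_num)
    _ ≤ 12 := by norm_num

theorem Psi_mul_Phi_nonneg (s t : ℝ) : 0 ≤ Psi s * Phi t :=
  mul_nonneg (Psi_nonneg s) (Phi_nonneg t)

theorem Psi_mul_Phi_le (s t : ℝ) : Psi s * Phi t ≤ 12 :=
  (mul_le_mul (Psi_le_exp_one s) (Phi_le t) (Phi_nonneg t) (Real.exp_pos 1).le).trans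
    exp_one_mul_sqrt_two_pi_exp_one_le

theorem chainF_zero (T : ℕ) : chainF T 0 = -Psi 1 * Phi 0 := by
  simp [chainF, Psi_of_le]

theorem chainF_zero_nonpos (T : ℕ) : chainF T 0 ≤ 0 := by
  rw [chainF_zero, neg_mul]
  exact neg_nonpos.mpr (Psi_mul_Phi_nonneg 1 0)

theorem neg_twelve_mul_le_chainF (T : ℕ) (x : EuclideanSpace ℝ (Fin (T + 1))) :
    -(12 * (T + 1)) ≤ chainF T x := by
  have first_term : -12 ≤ -Psi 1 * Phi (x 0) := by
    linarith [Psi_mul_Phi_le 1 (x 0)]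
  have link_term (i : Fin T) :
      -12 ≤ Psi (-x i.castSucc) * Phi (-x i.succ) - Psi (x i.castSucc) * Phi (x i.succ) := by
    linarith [Psi_mul_Phi_nonneg (-x i.castSucc) (-x i.succ),
      Psi_mul_Phi_le (x i.castSucc) (x i.succ)]
  calc
    -(12 * ((T : ℝ) + 1)) = -12 + ∑ _i : Fin T, (-12 : ℝ) := by
      rw [Fin.sum_const, nsmul_eq_mul]
      ring
    _ ≤ chainF T x := add_le_add first_term (Finset.sum_le_sum fun i _ ↦ link_term i)

/-- `F_T(0) − inf F_T ≤ 12 T` (stated for dimension `T + 1`, i.e. for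
every paper dimension `T ≥ 1`). -/
theorem chainF_zero_sub_inf_le (T : ℕ) :
    chainF T 0 - ⨅ x : EuclideanSpace ℝ (Fin (T + 1)), chainF T x ≤ 12 * (T + 1) := by
  have le_inf : -(12 * (T + 1) : ℝ) ≤ ⨅ x : EuclideanSpace ℝ (Fin (T + 1)), chainF T x :=
    le_ciInf (neg_twelve_mul_le_chainF T)
  linarith [chainF_zero_nonpos T]
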